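/- Let α, β ∈ ℝ and z ∈ ℂ. (i) If β is not a negative integer, then x ↦ y_{1,α,β}(z,x) is twice differentiable on (-1,1) and satisfies -(1-x²) y''(x) + (α-β+(α+β+2)x) y'(x) = z y(x) for all x ∈ (-1,1). (ii) If β is not a nonnegative integer, then x ↦ y_{2,α,β}(z,x) is twice differentiable on (-1,1) and satisfies the same equation -(1-x²) y''(x) + (α-β+(α+β+2)x) y'(x) = z y(x) for all x ∈ (-1,1). -/

import Mathlib

/-!
The hypergeometric series `F = ∑ uₙ ξⁿ` converges on the open unit disc by the ratio test, so it may
be differentiated termwise there. Its coefficients satisfy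
`(n+1)(c+n) uₙ₊₁ = (a+n)(b+n) uₙ`, which is the coefficientwise form of Euler's equation
`ξ(1-ξ)F'' + (c-(a+b+1)ξ)F' - abF = 0` (`hyp2F1_ode`).

Both claims follow by the substitution `ξ = (1+x)/2`, for which `1-x² = 4ξ(1-ξ)`. For the first
solution `a + b = 1+α+β` and `ab = -z`, because `σ² = (1+α+β)² + 4z`. For the second, the chain and
product rules for `(1+x)^(-β) F((1+x)/2)` reduce the Jacobi equation to Euler's equation
with `a + b = 1+α-β`, `ab = -β(1+α) - z` and `c = 1-β`.
-/

open Complex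

/-- The Pochhammer symbol `(u)_n = ∏_{j=0}^{n-1} (u+j)` for complex `u`. -/
noncomputable def cpoch (u : ℂ) (n : ℕ) : ℂ := ∏ j ∈ Finset.range n, (u + (j : ℂ))

/-- The Gauss hypergeometric series `₂F₁(a,b;c;ξ)`. -/
noncomputable def hyp2F1 (a b c ξ : ℂ) : ℂ :=
  ∑' n : ℕ, cpoch a n * cpoch b n / (cpoch c n * (n.factorial : ℂ)) * ξ ^ n

/-- Principal branch of the square root `σ_{α,β}(z) = ((1+α+β)^2 + 4z)^{1/2}`. -/
noncomputable def sigmaAB (α β : ℝ) (z : ℂ) : ℂ :=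
  (((1 + α + β : ℝ) : ℂ) ^ 2 + 4 * z) ^ ((1 : ℂ) / 2)

/-- The first Jacobi solution `y_{1,α,β}(z,·)` at the endpoint `-1`. -/
noncomputable def y1J (α β : ℝ) (z : ℂ) (x : ℝ) : ℂ :=
  hyp2F1 ((((1 + α + β : ℝ) : ℂ) + sigmaAB α β z) / 2)
    ((((1 + α + β : ℝ) : ℂ) - sigmaAB α β z) / 2)
    (1 + (β : ℂ)) (((1 + x) / 2 : ℝ) : ℂ)

/-- The second Jacobi solution `y_{2,α,β}(z,·)` at the endpoint `-1`. -/
noncomputable def y2J (α β : ℝ) (z : ℂ) (x : ℝ) : ℂ :=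
  (((1 + x : ℝ) : ℂ)) ^ (-(β : ℂ)) *
    hyp2F1 ((((1 + α - β : ℝ) : ℂ) + sigmaAB α β z) / 2)
      ((((1 + α - β : ℝ) : ℂ) - sigmaAB α β z) / 2)
      (1 - (β : ℂ)) (((1 + x) / 2 : ℝ) : ℂ)

/-- Termwise differentiation of a power series converging on the open unit disc. -/
lemma hasSum_deriv_powerSeries {u : ℕ → ℂ} {F : ℂ → ℂ}
    (hF : ∀ ξ : ℂ, ‖ξ‖ < 1 → HasSum (fun n => u n * ξ ^ n) (F ξ)) {ξ : ℂ} (hξ : ‖ξ‖ < 1) :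
    HasSum (fun n : ℕ => ((n : ℂ) + 1) * u (n + 1) * ξ ^ n) (deriv F ξ) ∧
      HasDerivAt F (deriv F ξ) ξ := by
  obtain ⟨r, hξr, hr1⟩ := exists_between hξ
  have hr0 : 0 ≤ r := (norm_nonneg ξ).trans hξr.le
  have hsum : Summable fun n => ‖u n * (r : ℂ) ^ n‖ :=
    (hF (r : ℂ) (by simpa [abs_of_nonneg hr0] using hr1)).summable.norm
  have hmem : ξ ∈ Metric.ball (0 : ℂ) r := by simpa using hξr
  have hdiff : ∀ n : ℕ, DifferentiableOn ℂ (fun w : ℂ => u n * w ^ n) (Metric.ball 0 r) :=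
    fun n => by fun_prop
  have hle : ∀ (n : ℕ) (w : ℂ), w ∈ Metric.ball (0 : ℂ) r →
      ‖u n * w ^ n‖ ≤ ‖u n * (r : ℂ) ^ n‖ := by
    intro n w hw
    have hw' : ‖w‖ < r := by simpa using hw
    simp only [norm_mul, norm_pow, Complex.norm_real, Real.norm_eq_abs, abs_of_nonneg hr0]
    gcongr
  have heq : (fun w => ∑' n, u n * w ^ n) =ᶠ[nhds ξ] F := by
    filter_upwards [Metric.isOpen_ball.mem_nhds hmem] with w hw
    have hw' : ‖w‖ < r := by simpa using hw
    exact (hF w (hw'.trans hr1)).tsum_eq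
  have h1 := hasSum_deriv_of_summable_norm hsum hdiff Metric.isOpen_ball hle hmem
  have h2 := (differentiableOn_tsum_of_summable_norm hsum hdiff Metric.isOpen_ball
    hle).differentiableAt (Metric.isOpen_ball.mem_nhds hmem)
  rw [heq.deriv_eq] at h1
  refine ⟨?_, (h2.congr_of_eventuallyEq heq.symm).hasDerivAt⟩
  rw [← hasSum_nat_add_iff' 1] at h1
  convert! h1 using 1
  · funext n
    simp
    ring
  · simp

lemma cpoch_succ (u : ℂ) (n : ℕ) : cpoch u (n + 1) = cpoch u n * (u + n) := by
  simp [cpoch, Finset.prod_range_succ]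

/-- The coefficients of the hypergeometric series. -/
noncomputable def hypCoeff (a b c : ℂ) (n : ℕ) : ℂ :=
  cpoch a n * cpoch b n / (cpoch c n * (n.factorial : ℂ))

lemma hypCoeff_succ (a b c : ℂ) {n : ℕ} (hc : c + n ≠ 0) :
    ((n : ℂ) + 1) * (c + n) * hypCoeff a b c (n + 1) = (a + n) * (b + n) * hypCoeff a b c n := by
  have hn : (n : ℂ) + 1 ≠ 0 := Nat.cast_add_one_ne_zero n
  rw [hypCoeff, hypCoeff, cpoch_succ, cpoch_succ, cpoch_succ, Nat.factorial_succ]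
  push_cast
  rw [show cpoch c n * (c + n) * (((n : ℂ) + 1) * (n.factorial : ℂ)) =
    ((n : ℂ) + 1) * (c + n) * (cpoch c n * (n.factorial : ℂ)) by ring, ← mul_div_assoc,
    mul_div_mul_left _ _ (mul_ne_zero hn hc)]
  ring

lemma hasSum_hyp2F1 (a b c : ℂ) (hc : ∀ n : ℕ, c + n ≠ 0) {ξ : ℂ} (hξ : ‖ξ‖ < 1) :
    HasSum (fun n => hypCoeff a b c n * ξ ^ n) (hyp2F1 a b c ξ) := by
  refine Summable.hasSum ?_
  obtain ⟨r, hξr, hr1⟩ := exists_between hξ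
  have hquot : ∀ s t : ℂ, Filter.Tendsto (fun n : ℕ => (s + (n : ℂ)) / (t + (n : ℂ)))
      Filter.atTop (nhds 1) := by
    intro s t
    simpa using tendsto_add_mul_div_add_mul_atTop_nhds s t (1 : ℂ) (one_ne_zero (α := ℂ))
  have hlim : Filter.Tendsto
      (fun n : ℕ => ‖(a + (n : ℂ)) / (c + n) * ((b + n) / (1 + n)) * ξ‖)
      Filter.atTop (nhds ‖ξ‖) := by
    simpa using (((hquot a c).mul (hquot b 1)).mul_const ξ).norm
  refine summable_of_ratio_norm_eventually_le hr1 ?_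
  filter_upwards [hlim.eventually_lt_const hξr] with n hn
  have hn1 : (1 : ℂ) + n ≠ 0 := by rw [add_comm]; exact Nat.cast_add_one_ne_zero n
  have hstep : hypCoeff a b c (n + 1) * ξ ^ (n + 1) =
      (a + (n : ℂ)) / (c + n) * ((b + n) / (1 + n)) * ξ * (hypCoeff a b c n * ξ ^ n) := by
    have h := hypCoeff_succ a b c (hc n)
    have hcn := hc n
    field_simp
    linear_combination ξ ^ (n + 1) * h
  rw [hstep, norm_mul]
  gcongr

/-- Euler's hypergeometric equation on the unit disc, together with the existence of the two
derivatives. -/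
lemma hyp2F1_ode (a b c : ℂ) (hc : ∀ n : ℕ, c + n ≠ 0) {ξ : ℂ} (hξ : ‖ξ‖ < 1) :
    HasDerivAt (hyp2F1 a b c) (deriv (hyp2F1 a b c) ξ) ξ ∧
    HasDerivAt (deriv (hyp2F1 a b c)) (deriv (deriv (hyp2F1 a b c)) ξ) ξ ∧
    ξ * (1 - ξ) * deriv (deriv (hyp2F1 a b c)) ξ +
      (c - (a + b + 1) * ξ) * deriv (hyp2F1 a b c) ξ - a * b * hyp2F1 a b c ξ = 0 := by
  have h0 : ∀ w : ℂ, ‖w‖ < 1 → HasSum (fun n => hypCoeff a b c n * w ^ n) (hyp2F1 a b c w) :=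
    fun w hw => hasSum_hyp2F1 a b c hc hw
  have h1 := fun (w : ℂ) (hw : ‖w‖ < 1) => (hasSum_deriv_powerSeries h0 hw).1
  have h2 := (hasSum_deriv_powerSeries h1 hξ).1
  refine ⟨(hasSum_deriv_powerSeries h0 hξ).2, (hasSum_deriv_powerSeries h1 hξ).2, ?_⟩
  set u := hypCoeff a b c
  -- Multiplication by `ξ` shifts the coefficients; the new constant term vanishes.
  have e1 : HasSum (fun n : ℕ => (n : ℂ) * u n * ξ ^ n) (ξ * deriv (hyp2F1 a b c) ξ) := by
    rw [← hasSum_nat_add_iff' 1]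
    convert! (h1 ξ hξ).mul_left ξ using 1
    · funext n
      push_cast
      ring
    · simp
  have e2 : HasSum (fun n : ℕ => (n : ℂ) * (((n : ℂ) + 1) * u (n + 1)) * ξ ^ n)
      (ξ * deriv (deriv (hyp2F1 a b c)) ξ) := by
    rw [← hasSum_nat_add_iff' 1]
    convert! h2.mul_left ξ using 1
    · funext n
      push_cast
      ring
    · simp
  have e3 : HasSum (fun n : ℕ => (n : ℂ) * ((n : ℂ) - 1) * u n * ξ ^ n)
      (ξ * (ξ * deriv (deriv (hyp2F1 a b c)) ξ)) := by
    rw [← hasSum_nat_add_iff' 1]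
    convert! e2.mul_left ξ using 1
    · funext n
      push_cast
      ring
    · simp
  have hall := (((e2.sub e3).add ((h1 ξ hξ).mul_left c)).sub (e1.mul_left (a + b + 1))).sub
    ((h0 ξ hξ).mul_left (a * b))
  have hzero := hall.tsum_eq.symm.trans ((tsum_congr (g := fun _ : ℕ => (0 : ℂ)) fun n => by
    linear_combination ξ ^ n * hypCoeff_succ a b c (hc n)).trans tsum_zero)
  linear_combination hzero

lemma sigmaAB_sq (α β : ℝ) (z : ℂ) :
    sigmaAB α β z ^ 2 = ((1 + α + β : ℝ) : ℂ) ^ 2 + 4 * z := by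
  rw [sigmaAB, one_div]
  exact_mod_cast Complex.cpow_nat_inv_pow _ two_ne_zero

lemma norm_half_lt_one {x : ℝ} (hx : x ∈ Set.Ioo (-1 : ℝ) 1) : ‖(((1 + x) / 2 : ℝ) : ℂ)‖ < 1 := by
  rw [Complex.norm_real, Real.norm_eq_abs, abs_lt]
  constructor <;> linarith [hx.1, hx.2]

/-- The chain rule for the affine substitution `ξ = (1+x)/2`. -/
lemma HasDerivAt.comp_half {F : ℂ → ℂ} {F' : ℂ} {x : ℝ}
    (h : HasDerivAt F F' (((1 + x) / 2 : ℝ) : ℂ)) :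
    HasDerivAt (fun t : ℝ => F (((1 + t) / 2 : ℝ) : ℂ)) (F' / 2) x := by
  have hin : HasDerivAt (fun t : ℝ => (((1 + t) / 2 : ℝ) : ℂ)) ((1 / 2 : ℝ) : ℂ) x :=
    (((hasDerivAt_id x).const_add 1).div_const 2).ofReal_comp
  convert! h.comp x hin using 1
  push_cast
  ring

lemma hasDerivAt_one_add_cpow (s : ℂ) {x : ℝ} (hx : -1 < x) :
    HasDerivAt (fun t : ℝ => (((1 + t : ℝ) : ℂ)) ^ s) (s * (((1 + x : ℝ) : ℂ)) ^ (s - 1)) x := by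
  have hin : HasDerivAt (fun t : ℝ => ((1 + t : ℝ) : ℂ)) ((1 : ℝ) : ℂ) x :=
    ((hasDerivAt_id x).const_add 1).ofReal_comp
  have hslit : ((1 + x : ℝ) : ℂ) ∈ Complex.slitPlane := by
    rw [Complex.ofReal_mem_slitPlane]
    linarith
  convert! (hasDerivAt_id ((1 + x : ℝ) : ℂ)).cpow_const (c := s) hslit |>.comp x hin using 1
  simp

/-- Explicit first and second derivatives on `(-1,1)` identify the iterated `deriv`. -/
lemma derivs_of_hasDerivAt {y p q : ℝ → ℂ}
    (hy : ∀ x ∈ Set.Ioo (-1 : ℝ) 1, HasDerivAt y (p x) x)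
    (hp : ∀ x ∈ Set.Ioo (-1 : ℝ) 1, HasDerivAt p (q x) x) {x : ℝ} (hx : x ∈ Set.Ioo (-1 : ℝ) 1) :
    deriv y x = p x ∧ HasDerivAt (deriv y) (q x) x := by
  refine ⟨(hy x hx).deriv, (hp x hx).congr_of_eventuallyEq ?_⟩
  filter_upwards [isOpen_Ioo.mem_nhds hx] with t ht
  exact (hy t ht).deriv

/-- `y_{1,α,β}(z,·)` (for `β` not a negative integer) and `y_{2,α,β}(z,·)` (for `β` not a
nonnegative integer) are twice differentiable solutions of the Jacobi equation
`-(1-x²)y'' + (α-β+(α+β+2)x)y' = z y` on `(-1,1)`. -/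
theorem jacobi_solutions_solve_ode (α β : ℝ) (z : ℂ) :
    ((∀ n : ℕ, β ≠ -((n : ℝ) + 1)) →
      ∀ x ∈ Set.Ioo (-1 : ℝ) 1,
        DifferentiableAt ℝ (y1J α β z) x ∧
        DifferentiableAt ℝ (deriv (y1J α β z)) x ∧
        -((1 - x ^ 2 : ℝ) : ℂ) * deriv (deriv (y1J α β z)) x +
            ((α - β + (α + β + 2) * x : ℝ) : ℂ) * deriv (y1J α β z) x =
          z * y1J α β z x) ∧
    ((∀ n : ℕ, β ≠ (n : ℝ)) →
      ∀ x ∈ Set.Ioo (-1 : ℝ) 1,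
        DifferentiableAt ℝ (y2J α β z) x ∧
        DifferentiableAt ℝ (deriv (y2J α β z)) x ∧
        -((1 - x ^ 2 : ℝ) : ℂ) * deriv (deriv (y2J α β z)) x +
            ((α - β + (α + β + 2) * x : ℝ) : ℂ) * deriv (y2J α β z) x =
          z * y2J α β z x) := by
  have hσ := sigmaAB_sq α β z
  constructor
  · intro hβ x hx
    have hc : ∀ n : ℕ, (1 + (β : ℂ)) + n ≠ 0 := by
      intro n h
      have h' : 1 + β + n = 0 := by exact_mod_cast h
      exact hβ n (by linarith)
    set a := (((1 + α + β : ℝ) : ℂ) + sigmaAB α β z) / 2 with ha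
    set b := (((1 + α + β : ℝ) : ℂ) - sigmaAB α β z) / 2 with hb
    have hode := fun (t : ℝ) (ht : t ∈ Set.Ioo (-1 : ℝ) 1) =>
      hyp2F1_ode a b _ hc (norm_half_lt_one ht)
    have hy : ∀ t ∈ Set.Ioo (-1 : ℝ) 1, HasDerivAt (y1J α β z) _ t :=
      fun t ht => (hode t ht).1.comp_half
    obtain ⟨hd1, hd2⟩ := derivs_of_hasDerivAt hy
      (fun t ht => (hode t ht).2.1.comp_half.div_const 2) hx
    refine ⟨(hy x hx).differentiableAt, hd2.differentiableAt, ?_⟩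
    rw [hd2.deriv, hd1]
    have hE := (hode x hx).2.2
    have hsum : a + b = 1 + α + β := by rw [ha, hb]; push_cast; ring
    have hprod : a * b = -z := by
      rw [ha, hb]
      linear_combination (-1 / 4 : ℂ) * hσ
    rw [hsum, hprod] at hE
    simp only [y1J, ← ha, ← hb]
    generalize deriv (deriv (hyp2F1 a b (1 + (β : ℂ)))) (((1 + x) / 2 : ℝ) : ℂ) = F2 at *
    generalize deriv (hyp2F1 a b (1 + (β : ℂ))) (((1 + x) / 2 : ℝ) : ℂ) = F1 at *
    generalize hyp2F1 a b (1 + (β : ℂ)) (((1 + x) / 2 : ℝ) : ℂ) = F0 at *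
    push_cast at hE ⊢
    linear_combination -hE
  · intro hβ x hx
    have hc : ∀ n : ℕ, (1 - (β : ℂ)) + n ≠ 0 := by
      intro n h
      have h' : 1 - β + n = 0 := by exact_mod_cast h
      exact hβ (n + 1) (by push_cast; linarith)
    set a := (((1 + α - β : ℝ) : ℂ) + sigmaAB α β z) / 2 with ha
    set b := (((1 + α - β : ℝ) : ℂ) - sigmaAB α β z) / 2 with hb
    have hode := fun (t : ℝ) (ht : t ∈ Set.Ioo (-1 : ℝ) 1) =>
      hyp2F1_ode a b _ hc (norm_half_lt_one ht)
    have hy : ∀ t ∈ Set.Ioo (-1 : ℝ) 1, HasDerivAt (y2J α β z) _ t :=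
      fun t ht => (hasDerivAt_one_add_cpow (-(β : ℂ)) ht.1).mul (hode t ht).1.comp_half
    obtain ⟨hd1, hd2⟩ := derivs_of_hasDerivAt hy
      (fun t ht => (((hasDerivAt_one_add_cpow (-(β : ℂ) - 1) ht.1).const_mul (-(β : ℂ))).mul
        (hode t ht).1.comp_half).add ((hasDerivAt_one_add_cpow (-(β : ℂ)) ht.1).mul
        ((hode t ht).2.1.comp_half.div_const 2))) hx
    refine ⟨(hy x hx).differentiableAt, hd2.differentiableAt, ?_⟩
    rw [hd2.deriv, hd1]
    have hE := (hode x hx).2.2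
    have hsum : a + b = 1 + α - β := by rw [ha, hb]; push_cast; ring
    have hprod : a * b = -β * (1 + α) - z := by
      rw [ha, hb]
      push_cast at hσ ⊢
      linear_combination (-1 / 4 : ℂ) * hσ
    rw [hsum, hprod] at hE
    have hw : ((1 + x : ℝ) : ℂ) ≠ 0 := by
      rw [Complex.ofReal_ne_zero]
      linarith [hx.1]
    -- Express all powers of `1 + x` through the lowest one, `(1 + x)^(-β-2)`.
    have hp1 : ((1 + x : ℝ) : ℂ) ^ (-(β : ℂ) - 1) =
        ((1 + x : ℝ) : ℂ) ^ (-(β : ℂ) - 1 - 1) * ((1 + x : ℝ) : ℂ) := by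
      rw [Complex.cpow_sub (-(β : ℂ) - 1) 1 hw, Complex.cpow_one, div_mul_cancel₀ _ hw]
    have hp0 : ((1 + x : ℝ) : ℂ) ^ (-(β : ℂ)) =
        ((1 + x : ℝ) : ℂ) ^ (-(β : ℂ) - 1 - 1) * ((1 + x : ℝ) : ℂ) ^ 2 := by
      rw [pow_two, ← mul_assoc, ← hp1, Complex.cpow_sub (-(β : ℂ)) 1 hw, Complex.cpow_one, div_mul_cancel₀ _ hw]
    simp only [y2J, ← ha, ← hb]
    rw [hp0, hp1]
    generalize ((1 + x : ℝ) : ℂ) ^ (-(β : ℂ) - 1 - 1) = P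
    generalize deriv (deriv (hyp2F1 a b (1 - (β : ℂ)))) (((1 + x) / 2 : ℝ) : ℂ) = F2 at *
    generalize deriv (hyp2F1 a b (1 - (β : ℂ))) (((1 + x) / 2 : ℝ) : ℂ) = F1 at *
    generalize hyp2F1 a b (1 - (β : ℂ)) (((1 + x) / 2 : ℝ) : ℂ) = F0 at *
    push_cast at hE ⊢
    linear_combination -(P * (1 + (x : ℂ)) ^ 2) * hE
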